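/- arXiv:1504.04654 — 2 statements merged into one kernel-verified Lean document; each statement's English description precedes it below -/
import Mathlib

section
/- Let N ≥ 1 be an integer, let ε > 0, let r₁, …, r_N > 0, and let M ≥ 1 be an integer. Then there exist points a⁽¹⁾, …, a⁽ᴹ⁾ in the solid ellipsoid E(r) = { a ∈ ℝᴺ : Σₙ₌₁ᴺ aₙ²/rₙ² ≤ 1 } whose cumulative error measure satisfies Δ ≤ M · εᴺ/(Πₙ₌₁ᴺ rₙ). In particular, for any δ ∈ (0,1), if M ≤ δ · (Πₙ₌₁ᴺ rₙ)/εᴺ then there exists a codebook of M points in E(r) with Δ ≤ δ. -/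
/-!
The volume of `Dⁱ` is at most the sum over `j ≠ i` of the volumes of the overlaps `Sⁱ ∩ Sʲ`.
By Tonelli, the overlap of a fixed `ε`-ball with an `ε`-ball centred at `x`, integrated over all
`x`, equals `V²`, where `V` is the volume of an `ε`-ball (`lintegral_overlap`). Hence its average
over the ellipsoid `E` is at most `V² / vol E`, and the same holds, with a factor `M`, for the
total overlap with `M` fixed balls. Instead of drawing the codebook at random all at once, choose
the points one after another, each no worse than the average given the points already chosen
(`exists_codebook`). The total overlap over ordered pairs is then at most `M² V² / vol E`.
Since `vol E / V = (∏ rₙ) / εᴺ` (`volume_ellipsoid`), dividing by `M V` gives the bound.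
-/

open Metric MeasureTheory Finset

/-- The error region `Dⁱ` of the `i`-th codeword under minimum-distance decoding. -/
def errRegion {N M : ℕ} (ε : ℝ) (a : Fin M → EuclideanSpace ℝ (Fin N)) (i : Fin M) :
    Set (EuclideanSpace ℝ (Fin N)) :=
  {x | x ∈ closedBall (a i) ε ∧ ∃ j : Fin M, j ≠ i ∧ dist x (a j) ≤ dist x (a i)}

/-- The cumulative error measure `Δ = (1/M) Σᵢ vol(Dⁱ)/vol(Sⁱ)`. -/
noncomputable def cumErr {N M : ℕ} (ε : ℝ) (a : Fin M → EuclideanSpace ℝ (Fin N)) : ℝ :=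
  (1 / (M : ℝ)) * ∑ i : Fin M,
    (volume (errRegion ε a i)).toReal / (volume (closedBall (a i) ε)).toReal

/-- The volume of the intersection of the closed `ε`-balls around two points. -/
noncomputable def overlap {N : ℕ} (ε : ℝ) (x y : EuclideanSpace ℝ (Fin N)) : ENNReal :=
  volume (closedBall x ε ∩ closedBall y ε)

lemma overlap_comm {N : ℕ} (ε : ℝ) (x y : EuclideanSpace ℝ (Fin N)) :
    overlap ε x y = overlap ε y x := by
  rw [overlap, overlap, Set.inter_comm]

/-- For fixed `y`, the pairs `(x, z)` such that `z` lies in the `ε`-balls around both `x` and `y`;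
computing the volume of this set in two ways gives `lintegral_overlap`. -/
lemma measurableSet_overlap {N : ℕ} (ε : ℝ) (y : EuclideanSpace ℝ (Fin N)) :
    MeasurableSet {p : EuclideanSpace ℝ (Fin N) × EuclideanSpace ℝ (Fin N) |
      p.2 ∈ closedBall p.1 ε ∩ closedBall y ε} := by
  exact ((isClosed_le (continuous_snd.dist continuous_fst) continuous_const).inter
    (isClosed_le (continuous_snd.dist continuous_const) continuous_const)).measurableSet

lemma measurable_overlap {N : ℕ} (ε : ℝ) (y : EuclideanSpace ℝ (Fin N)) :
    Measurable fun x => overlap ε x y :=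
  measurable_measure_prodMk_left (measurableSet_overlap ε y)

lemma lintegral_overlap {N : ℕ} (ε : ℝ) (y : EuclideanSpace ℝ (Fin N)) :
    ∫⁻ x, overlap ε x y =
      volume (closedBall (0 : EuclideanSpace ℝ (Fin N)) ε) ^ 2 := by
  have h := measurableSet_overlap ε y
  have h1 := Measure.prod_apply (μ := volume) (ν := volume) h
  have h2 := Measure.prod_apply_symm (μ := volume) (ν := volume) h
  refine (h1.symm.trans h2).trans ?_
  -- For fixed `z`, the section is the `ε`-ball around `z` if `z` is near `y`, and empty otherwise.
  have h3 : ∀ z : EuclideanSpace ℝ (Fin N),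
      volume ((fun x => (x, z)) ⁻¹' {p : EuclideanSpace ℝ (Fin N) × EuclideanSpace ℝ (Fin N) |
        p.2 ∈ closedBall p.1 ε ∩ closedBall y ε}) =
      (closedBall y ε).indicator
        (fun _ => volume (closedBall (0 : EuclideanSpace ℝ (Fin N)) ε)) z := by
    intro z
    by_cases hz : z ∈ closedBall y ε
    · rw [Set.indicator_of_mem hz, ← Measure.addHaar_closedBall_center volume z ε]
      congr 1
      ext x
      simp only [Set.mem_preimage, Set.mem_ofPred_eq, Set.mem_inter_iff, hz, and_true]
      exact mem_closedBall_comm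
    · rw [Set.indicator_of_notMem hz]
      have : ((fun x => (x, z)) ⁻¹' {p : EuclideanSpace ℝ (Fin N) × EuclideanSpace ℝ (Fin N) |
        p.2 ∈ closedBall p.1 ε ∩ closedBall y ε}) = ∅ := by
        ext x
        simp only [Set.mem_preimage, Set.mem_ofPred_eq, Set.mem_inter_iff, hz, and_false,
          Set.mem_empty_iff_false]
      rw [this, measure_empty]
  simp_rw [h3]
  rw [lintegral_indicator measurableSet_closedBall, setLIntegral_const,
    Measure.addHaar_closedBall_center volume y ε, sq]

/-- Averaging over the next codeword: some point of `S` overlaps the balls around the points of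
`a` no more than a uniformly random point of `S` does on average. -/
lemma exists_next {N M : ℕ} (ε : ℝ) (S : Set (EuclideanSpace ℝ (Fin N)))
    (h0 : volume S ≠ 0) (hfin : volume S ≠ ⊤) (a : Fin M → EuclideanSpace ℝ (Fin N)) :
    ∃ x ∈ S, ∑ i, overlap ε x (a i) ≤
      M * (volume (closedBall (0 : EuclideanSpace ℝ (Fin N)) ε) ^ 2 / volume S) := by
  have hm : Measurable fun x => ∑ i, overlap ε x (a i) :=
    Finset.measurable_sum _ fun i _ => measurable_overlap ε (a i)
  obtain ⟨x, hx, hle⟩ := exists_le_setLAverage h0 hfin hm.aemeasurable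
  refine ⟨x, hx, hle.trans ?_⟩
  rw [setLAverage_eq, ← mul_div_assoc]
  gcongr
  calc ∫⁻ x in S, ∑ i, overlap ε x (a i) ≤ ∫⁻ x, ∑ i, overlap ε x (a i) :=
        setLIntegral_le_lintegral _ _
    _ = M * volume (closedBall (0 : EuclideanSpace ℝ (Fin N)) ε) ^ 2 := by
        rw [lintegral_finsetSum _ fun i _ => measurable_overlap ε (a i)]
        simp [lintegral_overlap]

/-- The greedy choice of codewords. A new codeword adds its overlap with each earlier one twice,
as the sum runs over ordered pairs, and `M² + 2M ≤ (M + 1)²`. -/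
lemma exists_codebook {N : ℕ} (ε : ℝ) (S : Set (EuclideanSpace ℝ (Fin N)))
    (h0 : volume S ≠ 0) (hfin : volume S ≠ ⊤) (M : ℕ) :
    ∃ a : Fin M → EuclideanSpace ℝ (Fin N), (∀ i, a i ∈ S) ∧
      ∑ i, ∑ j, (if j = i then 0 else overlap ε (a i) (a j)) ≤
        (M : ENNReal) ^ 2 *
          (volume (closedBall (0 : EuclideanSpace ℝ (Fin N)) ε) ^ 2 / volume S) := by
  induction M with
  | zero => exact ⟨Fin.elim0, fun i => i.elim0, by simp⟩
  | succ M ih =>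
    obtain ⟨a, ha, hle⟩ := ih
    obtain ⟨x, hx, hxle⟩ := exists_next ε S h0 hfin a
    refine ⟨Fin.cons x a, Fin.cases hx ha, ?_⟩
    set K := volume (closedBall (0 : EuclideanSpace ℝ (Fin N)) ε) ^ 2 / volume S
    have hsplit : ∑ i, ∑ j, (if j = i then 0 else
          overlap ε ((Fin.cons x a : Fin (M + 1) → EuclideanSpace ℝ (Fin N)) i)
            ((Fin.cons x a : Fin (M + 1) → EuclideanSpace ℝ (Fin N)) j)) =
        ∑ i, overlap ε x (a i) + (∑ i, overlap ε x (a i) +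
          ∑ i, ∑ j, (if j = i then 0 else overlap ε (a i) (a j))) := by
      simp [Fin.sum_univ_succ, Fin.succ_ne_zero, (Fin.succ_ne_zero _).symm,
        Finset.sum_add_distrib, overlap_comm ε _ x]
    rw [hsplit]
    calc _ ≤ M * K + (M * K + (M : ENNReal) ^ 2 * K) := by gcongr
      _ ≤ M * K + (M * K + (M : ENNReal) ^ 2 * K) + K := le_self_add
      _ = _ := by push_cast; ring

/-- The ellipsoid is the preimage of the unit ball under the diagonal map with entries `1 / rₙ`. -/
lemma volume_ellipsoid {N : ℕ} (r : Fin N → ℝ) (hr : ∀ n, 0 < r n) :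
    volume {x : EuclideanSpace ℝ (Fin N) | ∑ n, (x n) ^ 2 / (r n) ^ 2 ≤ 1} =
      ENNReal.ofReal (∏ n, r n) * volume (closedBall (0 : EuclideanSpace ℝ (Fin N)) 1) := by
  set T := Matrix.toLpLin 2 2 (Matrix.diagonal fun n => (r n)⁻¹) with hT
  have hdet : LinearMap.det T = (∏ n, r n)⁻¹ := by
    rw [hT, Matrix.toLpLin_eq_toLin, LinearMap.det_toLin, Matrix.det_diagonal,
      Finset.prod_inv_distrib]
  have hp : 0 < ∏ n, r n := Finset.prod_pos fun n _ => hr n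
  have hne : LinearMap.det T ≠ 0 := by rw [hdet]; positivity
  have h := Measure.addHaar_preimage_linearMap volume hne
    (closedBall (0 : EuclideanSpace ℝ (Fin N)) 1)
  rw [hdet, inv_inv, abs_of_pos hp] at h
  rw [← h]
  congr 1
  ext x
  have hTx : ∀ n, T x n = (r n)⁻¹ * x n := by
    intro n
    simp [hT, Matrix.mulVec_diagonal]
  rw [Set.mem_preimage, mem_closedBall_zero_iff, Set.mem_ofPred_eq,
    ← sq_le_one_iff₀ (norm_nonneg _), EuclideanSpace.norm_sq_eq]
  simp [hTx, mul_pow, div_eq_inv_mul]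

lemma volume_errRegion_le {N M : ℕ} (ε : ℝ) (a : Fin M → EuclideanSpace ℝ (Fin N)) (i : Fin M) :
    volume (errRegion ε a i) ≤ ∑ j, (if j = i then 0 else overlap ε (a i) (a j)) := by
  have hsub : errRegion ε a i ⊆
      ⋃ j ∈ Finset.univ.filter (fun j => j ≠ i), closedBall (a i) ε ∩ closedBall (a j) ε := by
    rintro x ⟨hx, j, hj, hd⟩
    simp only [Set.mem_iUnion]
    exact ⟨j, by simpa using hj, hx, hd.trans hx⟩
  refine (measure_mono hsub).trans ((measure_biUnion_finset_le _ _).trans ?_)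
  rw [Finset.sum_filter]
  simp only [ne_eq, ite_not]
  exact le_rfl

lemma exists_cumErr_le (N : ℕ) (ε : ℝ) (hε : 0 < ε)
    (r : Fin N → ℝ) (hr : ∀ n, 0 < r n) (M : ℕ) (hM : 1 ≤ M) :
    ∃ a : Fin M → EuclideanSpace ℝ (Fin N),
      (∀ i, ∑ n, (a i n) ^ 2 / (r n) ^ 2 ≤ 1) ∧
      cumErr ε a ≤ (M : ℝ) * ε ^ N / ∏ n, r n := by
  have hp : 0 < ∏ n, r n := Finset.prod_pos fun n _ => hr n
  have hE := volume_ellipsoid r hr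
  set S := {x : EuclideanSpace ℝ (Fin N) | ∑ n, (x n) ^ 2 / (r n) ^ 2 ≤ 1}
  set c := volume (closedBall (0 : EuclideanSpace ℝ (Fin N)) 1) with hc
  have hc0 : c ≠ 0 := (measure_closedBall_pos volume _ one_pos).ne'
  have hct : c ≠ ⊤ := measure_closedBall_lt_top.ne
  have hV : ∀ x : EuclideanSpace ℝ (Fin N),
      volume (closedBall x ε) = ENNReal.ofReal (ε ^ N) * c := by
    intro x
    rw [Measure.addHaar_closedBall' volume x hε.le, finrank_euclideanSpace_fin]
  have hS0 : volume S ≠ 0 := by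
    rw [hE]
    exact mul_ne_zero (by simpa using hp) hc0
  have hSt : volume S ≠ ⊤ := by
    rw [hE]
    exact ENNReal.mul_ne_top ENNReal.ofReal_ne_top hct
  obtain ⟨a, ha, hle⟩ := exists_codebook ε S hS0 hSt M
  refine ⟨a, ha, ?_⟩
  have hcpos : 0 < c.toReal := ENNReal.toReal_pos hc0 hct
  have hsum := (Finset.sum_le_sum fun i _ => volume_errRegion_le ε a i).trans hle
  have hfin : ∀ i ∈ (Finset.univ : Finset (Fin M)), volume (errRegion ε a i) ≠ ⊤ := fun i _ =>
    measure_ne_top_of_subset (fun x hx => hx.1) (measure_closedBall_lt_top (x := a i) (r := ε)).ne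
  have htop : (M : ENNReal) ^ 2 *
      (volume (closedBall (0 : EuclideanSpace ℝ (Fin N)) ε) ^ 2 / volume S) ≠ ⊤ :=
    ENNReal.mul_ne_top (by simp)
      (ENNReal.div_ne_top (ENNReal.pow_ne_top measure_closedBall_lt_top.ne) hS0)
  have hreal := ENNReal.toReal_mono htop hsum
  rw [ENNReal.toReal_sum hfin, hE, hV] at hreal
  simp only [ENNReal.toReal_mul, ENNReal.toReal_div, ENNReal.toReal_pow, ENNReal.toReal_natCast,
    ENNReal.toReal_ofReal hp.le, ENNReal.toReal_ofReal (pow_pos hε N).le] at hreal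
  have hM0 : (0 : ℝ) < M := by exact_mod_cast hM
  have hεN : 0 < ε ^ N := pow_pos hε N
  simp only [cumErr, hV, ENNReal.toReal_mul, ENNReal.toReal_ofReal hεN.le]
  rw [← Finset.sum_div]
  calc _ ≤ 1 / (M : ℝ) * ((M : ℝ) ^ 2 * ((ε ^ N * c.toReal) ^ 2 / ((∏ n, r n) * c.toReal)) /
        (ε ^ N * c.toReal)) := by gcongr
    _ = _ := by field_simp

/-- There exists a codebook of `M` points in the solid ellipsoid
`{a : Σ aₙ²/rₙ² ≤ 1}` with cumulative error measure `Δ ≤ M·εᴺ/(Π rₙ)`; in particular,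
for `δ ∈ (0,1)`, if `M ≤ δ·(Π rₙ)/εᴺ` then there is a codebook with `Δ ≤ δ`. -/
theorem random_coding_existence (N : ℕ) (hN : 1 ≤ N) (ε : ℝ) (hε : 0 < ε)
    (r : Fin N → ℝ) (hr : ∀ n, 0 < r n) (M : ℕ) (hM : 1 ≤ M) :
    (∃ a : Fin M → EuclideanSpace ℝ (Fin N),
      (∀ i, ∑ n, (a i n) ^ 2 / (r n) ^ 2 ≤ 1) ∧
      cumErr ε a ≤ (M : ℝ) * ε ^ N / ∏ n, r n) ∧
    (∀ δ : ℝ, 0 < δ → δ < 1 → (M : ℝ) ≤ δ * (∏ n, r n) / ε ^ N →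
      ∃ a : Fin M → EuclideanSpace ℝ (Fin N),
        (∀ i, ∑ n, (a i n) ^ 2 / (r n) ^ 2 ≤ 1) ∧
        cumErr ε a ≤ δ) := by
  have hp : 0 < ∏ n, r n := Finset.prod_pos fun n _ => hr n
  obtain ⟨a, ha, hle⟩ := exists_cumErr_le N ε hε r hr M hM
  refine ⟨⟨a, ha, hle⟩, fun δ _ _ hMδ => ⟨a, ha, hle.trans ?_⟩⟩
  rw [le_div_iff₀ (pow_pos hε N)] at hMδ
  exact (div_le_iff₀ hp).2 hMδ
end

section
/- Fix real numbers R > ε > 0. For each integer N ≥ 1, let L_N denote the minimal cardinality of a finite set C ⊆ ℝᴺ such that every point of the closed Euclidean ball of radius R centered at the origin in ℝᴺ lies within distance ε of some point of C. Then lim_{N→∞} (log₂ L_N)/N = log₂(R/ε). -/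
/-!
The lower bound compares volumes: `k` balls of radius `ε` cover a ball of radius `R` only if
`k ε ^ N ≥ R ^ N` (`cover_card_ge`).

For the upper bound, take `e` slightly below `ε` and draw centres uniformly from the ball
`B(0, ρ)` with `ρ² = R² - e²`. A point `x` of `B(0, R)` is covered by such a centre with
probability `vol (B(0, ρ) ∩ B(x, e)) / vol B(0, ρ)`, and up to a subexponential factor this is
at least `(e / R) ^ N`: the lens contains the part near a hyperplane of a ball whose radius `h`
is any number below `ρ e / R`, and in high dimension nearly all the volume of a ball lies near a
hyperplane through its centre (`band_volume`, `lens_volume`). A finite net of `B(0, R)` at scale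
`ε - e` has only exponentially many points (`exists_net`), so choosing centres greedily, each
covering at least the average proportion of the net points still uncovered, covers the whole
net after `O(N)` times the inverse probability many choices (`exists_hitting`, `exists_cover`).
The factor `O(N)` disappears in the exponential rate (`eventually_cover`).
-/

open Metric Filter

/-- The minimal cardinality of a finite `ε`-cover of the closed ball of radius `R`
centered at the origin in `ℝᴺ`. -/
noncomputable def minCover (R ε : ℝ) (N : ℕ) : ℕ :=
  sInf {k : ℕ | ∃ C : Finset (EuclideanSpace ℝ (Fin N)), C.card = k ∧
    ∀ x ∈ closedBall (0 : EuclideanSpace ℝ (Fin N)) R, ∃ c ∈ C, dist x c ≤ ε}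

/-! ### Finite nets of a ball -/

open MeasureTheory in
/-- A ball of radius `R` in `ℝᴺ` has a finite `δ`-net with exponentially many points: a maximal
`δ`-separated subset, whose size is bounded by comparing volumes. -/
lemma exists_net (N : ℕ) (R δ : ℝ) (hR : 0 < R) (hδ : 0 < δ) :
    ∃ X : Finset (EuclideanSpace ℝ (Fin N)), (X.card : ℝ) ≤ ((R + δ / 2) / (δ / 2)) ^ N ∧
      (∀ x ∈ X, ‖x‖ ≤ R) ∧
      ∀ x ∈ closedBall (0 : EuclideanSpace ℝ (Fin N)) R, ∃ y ∈ X, dist x y ≤ δ := by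
  classical
  let E := EuclideanSpace ℝ (Fin N)
  let good : Finset E → Prop := fun X =>
    (∀ x ∈ X, ‖x‖ ≤ R) ∧ ∀ x ∈ X, ∀ y ∈ X, x ≠ y → δ < dist x y
  have hb : 0 < volume.real (ball (0 : E) 1) :=
    ENNReal.toReal_pos (measure_ball_pos _ _ one_pos).ne' measure_ball_lt_top.ne
  have hcard : ∀ X : Finset E, good X → (X.card : ℝ) ≤ ((R + δ / 2) / (δ / 2)) ^ N := by
    rintro X ⟨hX, hsep⟩
    have h1 : volume.real (⋃ x ∈ X, closedBall x (δ / 2))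
        = ∑ x ∈ X, volume.real (closedBall x (δ / 2)) := by
      refine measureReal_biUnion_finset ?_ (fun _ _ => measurableSet_closedBall)
        (fun _ _ => measure_closedBall_lt_top.ne)
      intro x hx y hy hxy
      exact closedBall_disjoint_closedBall (by linarith [hsep x hx y hy hxy])
    have h2 : volume.real (⋃ x ∈ X, closedBall x (δ / 2))
        ≤ volume.real (closedBall (0 : E) (R + δ / 2)) := by
      refine measureReal_mono ?_ measure_closedBall_lt_top.ne
      refine Set.iUnion₂_subset fun x hx => closedBall_subset_closedBall' ?_
      rw [dist_zero_right]
      linarith [hX x hx]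
    have hR' : 0 ≤ R + δ / 2 := by positivity
    have hδ' : 0 < δ / 2 := by positivity
    rw [h1, Measure.addHaar_real_closedBall _ _ hR'] at h2
    simp only [Measure.addHaar_real_closedBall _ _ hδ'.le, Finset.sum_const, nsmul_eq_mul,
      ← mul_assoc] at h2
    have h3 := le_of_mul_le_mul_right h2 hb
    rw [div_pow, le_div_iff₀ (by positivity)]
    simpa [E] using h3
  let T : Set ℕ := {n | ∃ X, good X ∧ X.card = n}
  have hT : T.Nonempty := ⟨0, ∅, by simp [good], rfl⟩
  have hTb : BddAbove T := by
    refine ⟨⌊((R + δ / 2) / (δ / 2)) ^ N⌋₊, ?_⟩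
    rintro n ⟨X, hX, rfl⟩
    exact Nat.le_floor (hcard X hX)
  obtain ⟨X, hX, hXc⟩ := Nat.sSup_mem hT hTb
  refine ⟨X, hcard X hX, hX.1, fun x hx => ?_⟩
  by_contra! hcon
  have hxX : x ∉ X := fun h => by
    have := hcon x h
    rw [dist_self] at this
    linarith
  have hins : good (insert x X) := by
    constructor
    · intro y hy
      rcases Finset.mem_insert.1 hy with rfl | hy
      · simpa using hx
      · exact hX.1 y hy
    · intro y hy z hz hyz
      rcases Finset.mem_insert.1 hy with hyx | hy <;> rcases Finset.mem_insert.1 hz with hzx | hz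
      · exact absurd (hyx.trans hzx.symm) hyz
      · rw [hyx]; exact hcon z hz
      · rw [hzx, dist_comm]; exact hcon y hy
      · exact hX.2 y hy z hz hyz
  have := le_csSup hTb ⟨_, hins, rfl⟩
  rw [Finset.card_insert_of_notMem hxX, ← hXc] at this
  omega

/-! ### Greedy choice of points hitting many sets -/

open MeasureTheory in
/-- One greedy step: if each set `S i` has probability at least `q`, some point lies in at least
a fraction `q` of them, since that is the expected fraction for a random point. -/
lemma exists_hit {α ι : Type*} [MeasurableSpace α] (μ : Measure α) [IsProbabilityMeasure μ]
    (S : ι → Set α) (hS : ∀ i, MeasurableSet (S i)) (q : ℝ) (U : Finset ι)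
    (hq : ∀ i ∈ U, q ≤ μ.real (S i)) :
    ∃ c, ∃ V ⊆ U, (∀ i ∈ U, i ∉ V → c ∈ S i) ∧ (V.card : ℝ) ≤ (1 - q) * U.card := by
  classical
  have hint : ∀ i ∈ U, Integrable ((S i).indicator (fun _ => (1 : ℝ))) μ := fun i _ =>
    (integrable_const 1).indicator (hS i)
  obtain ⟨c, hc⟩ := exists_integral_le (integrable_finsetSum U hint)
  rw [integral_finsetSum U hint] at hc
  have h1 : (U.card : ℝ) * q ≤ ∑ i ∈ U, ∫ a, (S i).indicator (fun _ => (1 : ℝ)) a ∂μ := by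
    rw [← nsmul_eq_mul]
    refine Finset.card_nsmul_le_sum _ _ _ fun i hi => ?_
    rw [integral_indicator_const _ (hS i)]
    simpa using hq i hi
  have h2 : ∑ i ∈ U, (S i).indicator (fun _ => (1 : ℝ)) c = ((U.filter (c ∈ S ·)).card : ℝ) := by
    simp [Set.indicator_apply]
  have h3 : ((U.filter (c ∈ S ·)).card : ℝ) + ((U.filter (c ∉ S ·)).card : ℝ) = U.card := by
    exact_mod_cast Finset.card_filter_add_card_filter_not (s := U) (c ∈ S ·)
  refine ⟨c, U.filter (c ∉ S ·), Finset.filter_subset _ _, ?_, ?_⟩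
  · intro i hi hiV
    by_contra h
    exact hiV (Finset.mem_filter.2 ⟨hi, h⟩)
  · linarith

open MeasureTheory in
/-- After `k` greedy steps, `V` collects the indices of the sets that may still be unhit. -/
lemma exists_greedy {α ι : Type*} [MeasurableSpace α] (μ : Measure α) [IsProbabilityMeasure μ]
    (S : ι → Set α) (hS : ∀ i, MeasurableSet (S i)) (q : ℝ) (hq1 : q ≤ 1) (X : Finset ι)
    (hq : ∀ i ∈ X, q ≤ μ.real (S i)) (k : ℕ) :
    ∃ C : Finset α, C.card ≤ k ∧ ∃ V ⊆ X, (∀ i ∈ X, i ∉ V → ∃ c ∈ C, c ∈ S i) ∧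
      (V.card : ℝ) ≤ (1 - q) ^ k * X.card := by
  classical
  induction k with
  | zero => exact ⟨∅, by simp, X, subset_rfl, fun i hi h => absurd hi h, by simp⟩
  | succ k ih =>
    obtain ⟨C, hC, V, hV, hcov, hcard⟩ := ih
    obtain ⟨c, W, hW, hWcov, hWcard⟩ := exists_hit μ S hS q V fun i hi => hq i (hV hi)
    refine ⟨insert c C, (Finset.card_insert_le _ _).trans (by omega), W, hW.trans hV, ?_, ?_⟩
    · intro i hi hiW
      by_cases h : i ∈ V
      · exact ⟨c, Finset.mem_insert_self _ _, hWcov i h hiW⟩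
      · obtain ⟨d, hd, hdS⟩ := hcov i hi h
        exact ⟨d, Finset.mem_insert_of_mem hd, hdS⟩
    · calc (W.card : ℝ) ≤ (1 - q) * V.card := hWcard
        _ ≤ (1 - q) * ((1 - q) ^ k * X.card) := by gcongr
        _ = _ := by ring

open MeasureTheory in
/-- The greedy choice hits every set after about `log |X| / q` steps, because then
`(1 - q) ^ k * |X| ≤ exp (-q k) * |X| < 1`. -/
lemma exists_hitting {α ι : Type*} [MeasurableSpace α] (μ : Measure α) [IsProbabilityMeasure μ]
    (S : ι → Set α) (hS : ∀ i, MeasurableSet (S i)) (q : ℝ) (hq0 : 0 < q) (hq1 : q ≤ 1)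
    (X : Finset ι) (hq : ∀ i ∈ X, q ≤ μ.real (S i)) (L : ℝ) (hL : 0 ≤ L)
    (hX : (X.card : ℝ) ≤ Real.exp L) :
    ∃ C : Finset α, (C.card : ℝ) ≤ L / q + 2 ∧ ∀ i ∈ X, ∃ c ∈ C, c ∈ S i := by
  set k := ⌊L / q⌋₊ + 1 with hk
  obtain ⟨C, hC, V, hV, hcov, hcard⟩ := exists_greedy μ S hS q hq1 X hq k
  have hkL : L / q < k := by rw [hk]; push_cast; exact Nat.lt_floor_add_one _
  have hkU : (k : ℝ) ≤ L / q + 1 := by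
    rw [hk]; push_cast
    linarith [Nat.floor_le (div_nonneg hL hq0.le)]
  have hlt : (V.card : ℝ) < 1 := by
    calc (V.card : ℝ) ≤ (1 - q) ^ k * X.card := hcard
      _ ≤ (Real.exp (-q)) ^ k * Real.exp L := by
        have : 1 - q ≤ Real.exp (-q) := Real.one_sub_le_exp_neg q
        gcongr
      _ = Real.exp (L - k * q) := by
        rw [← Real.exp_nat_mul, ← Real.exp_add]; ring_nf
      _ < 1 := by
        rw [Real.exp_lt_one_iff]
        rw [div_lt_iff₀ hq0] at hkL
        linarith
  have hV0 : V = ∅ := by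
    rw [← Finset.card_eq_zero]
    exact_mod_cast Nat.lt_one_iff.1 (by exact_mod_cast hlt)
  refine ⟨C, ?_, fun i hi => hcov i hi (by simp [hV0])⟩
  have : (C.card : ℝ) ≤ k := by exact_mod_cast hC
  linarith

/-! ### Volume of a lens of two balls -/

open MeasureTheory in
/-- Concentration near the equator: removing from `B(0, h)` the two caps
`{z | |⟪x, z⟫| > R w}` leaves most of the volume, because each cap lies in a ball of radius
`√(h² - w²)` centred at `± (w / R) • x`. -/
lemma band_volume (N : ℕ) (R w h : ℝ) (hR : 0 < R) (hw : 0 < w) (hh : 0 < h)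
    (x : EuclideanSpace ℝ (Fin N)) (hx : ‖x‖ ≤ R) :
    (h ^ N - 2 * √(h ^ 2 - w ^ 2) ^ N) * volume.real (ball (0 : EuclideanSpace ℝ (Fin N)) 1) ≤
      volume.real (closedBall (0 : EuclideanSpace ℝ (Fin N)) h ∩
        {z | |inner ℝ x z| ≤ R * w}) := by
  set m := √(h ^ 2 - w ^ 2) with hm
  have key : ∀ s : ℝ, s ^ 2 = 1 → ∀ z : EuclideanSpace ℝ (Fin N), ‖z‖ ≤ h →
      R * w ≤ s * inner ℝ x z → z ∈ closedBall ((s * (w / R)) • x) m := by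
    intro s hs z hz hxz
    rw [mem_closedBall, dist_eq_norm, hm]
    apply Real.le_sqrt_of_sq_le
    rw [norm_sub_sq_real, norm_smul, inner_smul_right, real_inner_comm, mul_pow, Real.norm_eq_abs,
      sq_abs, mul_pow, hs]
    have h1 : ‖z‖ ^ 2 ≤ h ^ 2 := by gcongr
    have h2 : (w / R) ^ 2 * ‖x‖ ^ 2 ≤ w ^ 2 := by
      calc (w / R) ^ 2 * ‖x‖ ^ 2 ≤ (w / R) ^ 2 * R ^ 2 := by gcongr
        _ = w ^ 2 := by field_simp
    have h3 : w ^ 2 ≤ (w / R) * (s * inner ℝ x z) := by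
      calc w ^ 2 = (w / R) * (R * w) := by field_simp
        _ ≤ _ := by gcongr
    linarith
  have hsub : closedBall (0 : EuclideanSpace ℝ (Fin N)) h ⊆
      (closedBall (0 : EuclideanSpace ℝ (Fin N)) h ∩ {z | |inner ℝ x z| ≤ R * w}) ∪
      (closedBall (((1 : ℝ) * (w / R)) • x) m ∪ closedBall (((-1 : ℝ) * (w / R)) • x) m) := by
    intro z hz
    by_cases hc : |inner ℝ x z| ≤ R * w
    · exact Or.inl ⟨hz, hc⟩
    · right
      rw [mem_closedBall_zero_iff] at hz
      rcases lt_abs.1 (not_le.1 hc) with h1 | h1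
      · exact Or.inl (key 1 (by norm_num) z hz (by linarith))
      · exact Or.inr (key (-1) (by norm_num) z hz (by linarith))
  have hfin : volume (closedBall (0 : EuclideanSpace ℝ (Fin N)) h ∩ {z | |inner ℝ x z| ≤ R * w})
      ≠ ⊤ := (measure_mono Set.inter_subset_left).trans_lt measure_closedBall_lt_top |>.ne
  have hle := (measureReal_mono (μ := volume) hsub (measure_union_ne_top hfin (measure_union_ne_top
    measure_closedBall_lt_top.ne measure_closedBall_lt_top.ne))).trans
    ((measureReal_union_le _ _).trans (add_le_add_right (measureReal_union_le _ _) _))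
  rw [Measure.addHaar_real_closedBall _ _ hh.le,
    Measure.addHaar_real_closedBall _ _ (Real.sqrt_nonneg _),
    Measure.addHaar_real_closedBall _ _ (Real.sqrt_nonneg _), finrank_euclideanSpace_fin] at hle
  linarith

open MeasureTheory in
/-- The lens `B(0, ρ) ∩ B(x, e)` with `ρ² + e² = R²`, `‖x‖ ≤ R` contains a translate, centred at
`(ρ² / R²) • x`, of the band of half-width `w` of `band_volume` in the ball of radius `h`. Here
`ρ e / R` is the radius of the sphere in which the two boundary spheres meet when `‖x‖ = R`, and
the gap between `h` and `ρ e / R` pays for the width of the band. -/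
lemma lens_volume (N : ℕ) (R e ρ h w : ℝ) (hR : 0 < R) (he : 0 < e) (hρ : 0 < ρ)
    (hsum : ρ ^ 2 + e ^ 2 = R ^ 2) (hh : 0 < h) (hw : 0 < w)
    (hhw : h ^ 2 + 2 * R * w ≤ (ρ * e / R) ^ 2)
    (x : EuclideanSpace ℝ (Fin N)) (hx : ‖x‖ ≤ R) :
    (h ^ N - 2 * √(h ^ 2 - w ^ 2) ^ N) * volume.real (ball (0 : EuclideanSpace ℝ (Fin N)) 1) ≤
      volume.real (closedBall (0 : EuclideanSpace ℝ (Fin N)) ρ ∩ closedBall x e) := by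
  refine (band_volume N R w h hR hw hh x hx).trans ?_
  rw [measureReal_def volume (closedBall 0 ρ ∩ closedBall x e),
    ← measure_preimage_add volume ((ρ ^ 2 / R ^ 2) • x)
    (closedBall (0 : EuclideanSpace ℝ (Fin N)) ρ ∩ closedBall x e), ← measureReal_def]
  refine measureReal_mono ?_ ?_
  · rintro z ⟨hz, hxz⟩
    rw [mem_closedBall_zero_iff] at hz
    have hz2 : ‖z‖ ^ 2 ≤ h ^ 2 := by gcongr
    have hx2 : ‖x‖ ^ 2 ≤ R ^ 2 := by gcongr
    obtain ⟨hxz1, hxz2⟩ := abs_le.1 (show |inner ℝ x z| ≤ R * w from hxz)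
    -- For `a + b = 1`, the point `a • x + z` satisfies
    -- `‖a • x + z‖² ≤ a² R² + 2 a R w + h² ≤ a² R² + a b R²`.
    have key : ∀ a b s : ℝ, 0 ≤ a → a ≤ 1 → s ^ 2 = 1 → a * b * R ^ 2 = (ρ * e / R) ^ 2 →
        a + b = 1 → ‖(s * a) • x + z‖ ^ 2 ≤ a * R ^ 2 := by
      intro a b s ha ha1 hs hab hsum1
      rw [norm_add_sq_real, norm_smul, inner_smul_left, mul_pow, Real.norm_eq_abs, sq_abs,
        mul_pow, hs]
      have h1 : a ^ 2 * ‖x‖ ^ 2 ≤ a ^ 2 * R ^ 2 := by gcongr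
      have hs' : s * inner ℝ x z ≤ R * w := by
        rcases (sq_eq_one_iff.1 hs) with rfl | rfl <;> linarith
      have h2 : a * (s * inner ℝ x z) ≤ 1 * (R * w) := by
        calc a * (s * inner ℝ x z) ≤ a * (R * w) := by gcongr
          _ ≤ 1 * (R * w) := by gcongr
      have h3 : a * R ^ 2 = a ^ 2 * R ^ 2 + (ρ * e / R) ^ 2 := by
        rw [← hab]; linear_combination (-a * R ^ 2) * hsum1
      simp only [conj_trivial]
      linarith
    have hab : (ρ ^ 2 / R ^ 2) + (e ^ 2 / R ^ 2) = 1 := by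
      rw [← add_div, hsum]; exact div_self (by positivity)
    have hρ1 : 0 ≤ ρ ^ 2 / R ^ 2 := by positivity
    have he1 : 0 ≤ e ^ 2 / R ^ 2 := by positivity
    constructor
    · rw [mem_closedBall_zero_iff]
      have := key _ _ 1 hρ1 (by linarith) (by norm_num) (by field_simp) hab
      rw [one_mul, div_mul_cancel₀ _ (by positivity)] at this
      exact (sq_le_sq₀ (norm_nonneg _) hρ.le).1 this
    · rw [mem_closedBall, dist_eq_norm]
      have := key (e ^ 2 / R ^ 2) (ρ ^ 2 / R ^ 2) (-1) he1 (by linarith) (by norm_num)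
        (by field_simp) (by linarith)
      rw [div_mul_cancel₀ _ (by positivity)] at this
      have heq : (ρ ^ 2 / R ^ 2) • x + z - x = ((-1) * (e ^ 2 / R ^ 2)) • x + z := by
        have : ρ ^ 2 / R ^ 2 = 1 + (-1) * (e ^ 2 / R ^ 2) := by linarith
        rw [this, add_smul, one_smul]; abel
      rw [heq]
      exact (sq_le_sq₀ (norm_nonneg _) he.le).1 this
  · rw [measure_preimage_add]
    exact (measure_mono Set.inter_subset_left).trans_lt measure_closedBall_lt_top |>.ne

/-! ### Covers of a ball -/

open MeasureTheory in
/-- If every lens `B(0, ρ) ∩ B(x, e)` fills a proportion `q` of `B(0, ρ)`, then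
`B(0, R)` has an `(e + δ)`-cover by `O(N / q)` points: choose random centres in `B(0, ρ)` that
hit the `e`-balls around all points of a `δ`-net. -/
lemma exists_cover (N : ℕ) (R e δ ρ q : ℝ) (hR : 0 < R) (hδ : 0 < δ) (hρ : 0 < ρ)
    (hq0 : 0 < q) (hq1 : q ≤ 1)
    (hq : ∀ x : EuclideanSpace ℝ (Fin N), ‖x‖ ≤ R →
      q * volume.real (closedBall (0 : EuclideanSpace ℝ (Fin N)) ρ) ≤
      volume.real (closedBall (0 : EuclideanSpace ℝ (Fin N)) ρ ∩ closedBall x e)) :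
    ∃ C : Finset (EuclideanSpace ℝ (Fin N)),
      (C.card : ℝ) ≤ N * Real.log ((R + δ / 2) / (δ / 2)) / q + 2 ∧
      ∀ x ∈ closedBall (0 : EuclideanSpace ℝ (Fin N)) R, ∃ c ∈ C, dist x c ≤ e + δ := by
  obtain ⟨X, hXcard, hXR, hX⟩ := exists_net N R δ hR hδ
  have hB0 : volume (closedBall (0 : EuclideanSpace ℝ (Fin N)) ρ) ≠ 0 :=
    (measure_closedBall_pos _ _ hρ).ne'
  have hBt : volume (closedBall (0 : EuclideanSpace ℝ (Fin N)) ρ) ≠ ⊤ :=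
    measure_closedBall_lt_top.ne
  set B := closedBall (0 : EuclideanSpace ℝ (Fin N)) ρ with hB
  have : IsProbabilityMeasure (ProbabilityTheory.cond volume B) :=
    ProbabilityTheory.cond_isProbabilityMeasure_of_finite hB0 hBt
  have h1 : 1 ≤ (R + δ / 2) / (δ / 2) := by rw [one_le_div (by positivity)]; linarith
  obtain ⟨C, hC, hhit⟩ := exists_hitting (ProbabilityTheory.cond volume B)
    (fun x => closedBall x e) (fun _ => measurableSet_closedBall) q hq0 hq1 X
    (by
      intro x hx
      rw [measureReal_def, ProbabilityTheory.cond_apply measurableSet_closedBall,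
        ENNReal.toReal_mul, ENNReal.toReal_inv, ← measureReal_def, ← measureReal_def,
        ← div_eq_inv_mul, le_div_iff₀ (show 0 < volume.real B from ENNReal.toReal_pos hB0 hBt)]
      exact hq x (hXR x hx))
    (N * Real.log ((R + δ / 2) / (δ / 2)))
    (mul_nonneg (Nat.cast_nonneg _) (Real.log_nonneg h1))
    (by rwa [Real.exp_nat_mul, Real.exp_log (by linarith)])
  refine ⟨C, hC, fun x hx => ?_⟩
  obtain ⟨y, hy, hxy⟩ := hX x hx
  obtain ⟨c, hc, hcy⟩ := hhit y hy
  rw [mem_closedBall, dist_comm] at hcy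
  exact ⟨c, hc, by linarith [dist_triangle x y c]⟩

open MeasureTheory in
/-- Volume bound: an `ε`-cover of the ball of radius `R` has at least `(R / ε) ^ N` points. -/
lemma cover_card_ge (N : ℕ) (R ε : ℝ) (hε : 0 < ε) (hR : 0 < R)
    (C : Finset (EuclideanSpace ℝ (Fin N)))
    (hC : ∀ x ∈ closedBall (0 : EuclideanSpace ℝ (Fin N)) R, ∃ c ∈ C, dist x c ≤ ε) :
    (R / ε) ^ N ≤ C.card := by
  have hb : 0 < volume.real (ball (0 : EuclideanSpace ℝ (Fin N)) 1) :=
    ENNReal.toReal_pos (measure_ball_pos _ _ one_pos).ne' measure_ball_lt_top.ne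
  have hsub : closedBall (0 : EuclideanSpace ℝ (Fin N)) R ⊆ ⋃ c ∈ C, closedBall c ε := by
    intro x hx
    obtain ⟨c, hc, hxc⟩ := hC x hx
    exact Set.mem_biUnion hc hxc
  have hfin : volume (⋃ c ∈ C, closedBall c ε) ≠ ⊤ :=
    (measure_biUnion_lt_top C.finite_toSet fun _ _ => measure_closedBall_lt_top).ne
  have h := (measureReal_mono (μ := volume) hsub hfin).trans (measureReal_biUnion_finset_le _ _)
  simp only [Measure.addHaar_real_closedBall _ _ hε.le, Measure.addHaar_real_closedBall _ _ hR.le,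
    Finset.sum_const, nsmul_eq_mul, finrank_euclideanSpace_fin, ← mul_assoc] at h
  rw [div_pow, div_le_iff₀ (by positivity)]
  exact le_of_mul_le_mul_right h hb

/-- Every rate above `R / ε` is attained by covers in all large dimensions. -/
lemma eventually_cover (R ε a : ℝ) (hε : 0 < ε) (hRε : ε < R) (ha : R / ε < a) :
    ∀ᶠ N : ℕ in atTop, ∃ C : Finset (EuclideanSpace ℝ (Fin N)), (C.card : ℝ) ≤ a ^ N ∧
      ∀ x ∈ closedBall (0 : EuclideanSpace ℝ (Fin N)) R, ∃ c ∈ C, dist x c ≤ ε := by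
  have hR : 0 < R := hε.trans hRε
  have ha1 : 1 < a := ((one_lt_div hε).2 hRε).trans ha
  have ha0 : 0 < a := by linarith
  obtain ⟨e, he1, heε⟩ : ∃ e, R / a < e ∧ e < ε := exists_between ((div_lt_comm₀ hε ha0).1 ha)
  have he : 0 < e := (div_pos hR ha0).trans he1
  set δ := ε - e with hδ
  have hδ0 : 0 < δ := by linarith
  have hd : 0 < R ^ 2 - e ^ 2 := by nlinarith
  set ρ := √(R ^ 2 - e ^ 2) with hρ
  have hρ0 : 0 < ρ := Real.sqrt_pos.2 hd
  have hsum : ρ ^ 2 + e ^ 2 = R ^ 2 := by rw [hρ, Real.sq_sqrt hd.le]; ring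
  obtain ⟨h, hh1, hh2⟩ : ∃ h, ρ / a < h ∧ h < ρ * e / R := by
    apply exists_between
    rw [div_lt_div_iff₀ ha0 hR, mul_assoc]
    rw [div_lt_iff₀ ha0] at he1
    gcongr
  have hh : 0 < h := (div_pos hρ0 ha0).trans hh1
  have hhρ : h < ρ := by
    refine hh2.trans ?_
    rw [div_lt_iff₀ hR]
    gcongr
    linarith
  have hsq : h ^ 2 < (ρ * e / R) ^ 2 := by gcongr
  set w := ((ρ * e / R) ^ 2 - h ^ 2) / (2 * R) with hw
  have hw0 : 0 < w := div_pos (by linarith) (by positivity)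
  have hhw : h ^ 2 + 2 * R * w ≤ (ρ * e / R) ^ 2 := by
    rw [hw, mul_div_cancel₀ _ (by positivity)]; linarith
  set m := √(h ^ 2 - w ^ 2) with hm
  have hmh : m < h := by
    rw [hm, Real.sqrt_lt' hh]
    have : 0 < w ^ 2 := by positivity
    linarith
  set K := Real.log ((R + δ / 2) / (δ / 2)) with hK
  -- The caps removed from the band are eventually at most half of the ball of radius `h`.
  have hlim1 : ∀ᶠ N : ℕ in atTop, (m / h) ^ N ≤ 1 / 4 :=
    (tendsto_pow_atTop_nhds_zero_of_lt_one (div_nonneg (Real.sqrt_nonneg _) hh.le)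
      ((div_lt_one hh).2 hmh)).eventually_le_const (by norm_num)
  -- With `q = (h / ρ) ^ N / 2`, the cover has `2 K N (ρ / h) ^ N + 2` points and `ρ / h < a`.
  have hlim2 : ∀ᶠ N : ℕ in atTop,
      2 * K * ((N : ℝ) * (ρ / h / a) ^ N) + 2 * (1 / a) ^ N ≤ 1 := by
    have hba : ρ / h / a < 1 := by
      rw [div_lt_one ha0]; exact (div_lt_comm₀ ha0 hh).1 hh1
    have t1 := tendsto_self_mul_const_pow_of_lt_one (r := ρ / h / a) (by positivity) hba
    have t2 := tendsto_pow_atTop_nhds_zero_of_lt_one (r := 1 / a) (by positivity)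
      ((div_lt_one ha0).2 ha1)
    have := (t1.const_mul (2 * K)).add (t2.const_mul 2)
    exact this.eventually_le_const (by norm_num)
  filter_upwards [hlim1, hlim2] with N h1 h2
  have hpow : 0 < (h / ρ) ^ N := by positivity
  have hpow1 : (h / ρ) ^ N ≤ 1 := pow_le_one₀ (by positivity) ((div_le_one hρ0).2 hhρ.le)
  obtain ⟨C, hC, hcov⟩ := exists_cover N R e δ ρ ((h / ρ) ^ N / 2) hR hδ0 hρ0 (by positivity)
    (by linarith) (by
      intro x hx
      refine le_trans ?_ (lens_volume N R e ρ h w hR he hρ0 hsum hh hw0 hhw x hx)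
      rw [MeasureTheory.Measure.addHaar_real_closedBall _ _ hρ0.le, finrank_euclideanSpace_fin,
        ← mul_assoc]
      gcongr
      rw [div_pow, div_le_iff₀ (by positivity)] at h1
      have : (h / ρ) ^ N / 2 * ρ ^ N = h ^ N / 2 := by rw [div_pow]; field_simp
      rw [this]
      linarith)
  refine ⟨C, hC.trans ?_, fun x hx => ?_⟩
  · have haN : 0 < a ^ N := by positivity
    have := mul_le_mul_of_nonneg_right h2 haN.le
    rw [one_mul] at this
    refine le_of_eq_of_le ?_ this
    rw [← hK]
    simp only [div_pow, one_pow]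
    field_simp
  · obtain ⟨c, hc, hxc⟩ := hcov x hx
    exact ⟨c, hc, by linarith⟩

/-! ### The limit of the entropy per dimension -/

/-- For `R > ε > 0`, the minimal cardinality `L_N` of an `ε`-cover of the closed
ball of radius `R` in `ℝᴺ` satisfies `lim_{N→∞} (log₂ L_N)/N = log₂(R/ε)`. -/
theorem entropy_per_dof (R ε : ℝ) (hε : 0 < ε) (hRε : ε < R) :
    Tendsto (fun N : ℕ => Real.logb 2 (minCover R ε N) / (N : ℝ)) atTop
      (nhds (Real.logb 2 (R / ε))) := by
  have hR : 0 < R := hε.trans hRε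
  have hRe : 0 < R / ε := by positivity
  have hlower : ∀ N : ℕ, (∃ C : Finset (EuclideanSpace ℝ (Fin N)),
      ∀ x ∈ closedBall (0 : EuclideanSpace ℝ (Fin N)) R, ∃ c ∈ C, dist x c ≤ ε) →
      (R / ε) ^ N ≤ minCover R ε N := by
    rintro N ⟨C, hC⟩
    -- A cover exists, so the infimum is attained and takes no junk value.
    obtain ⟨D, hD, hcov⟩ := Nat.sInf_mem (s := {k : ℕ | ∃ C : Finset (EuclideanSpace ℝ (Fin N)),
      C.card = k ∧ ∀ x ∈ closedBall (0 : EuclideanSpace ℝ (Fin N)) R, ∃ c ∈ C, dist x c ≤ ε})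
      ⟨_, C, rfl, hC⟩
    rw [minCover, ← hD]
    exact cover_card_ge N R ε hε hR D hcov
  rw [tendsto_order]
  constructor
  · intro b hb
    filter_upwards [eventually_cover R ε (R / ε + 1) hε hRε (by linarith), eventually_gt_atTop 0]
      with N ⟨C, _, hC⟩ hN
    refine hb.trans_le ?_
    have hN' : (0 : ℝ) < N := by exact_mod_cast hN
    rw [le_div_iff₀ hN', mul_comm, ← Real.logb_pow]
    exact Real.logb_le_logb_of_le (by norm_num) (by positivity) (hlower N ⟨C, hC⟩)
  · intro b hb
    obtain ⟨b', hb1, hb2⟩ := exists_between hb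
    have ha : R / ε < (2 : ℝ) ^ b' := (Real.logb_lt_iff_lt_rpow (by norm_num) hRe).1 hb1
    filter_upwards [eventually_cover R ε _ hε hRε ha, eventually_gt_atTop 0]
      with N ⟨C, hCcard, hC⟩ hN
    refine lt_of_le_of_lt ?_ hb2
    have hN' : (0 : ℝ) < N := by exact_mod_cast hN
    have hpos : (0 : ℝ) < minCover R ε N :=
      lt_of_lt_of_le (by positivity) (hlower N ⟨C, hC⟩)
    have hle : (minCover R ε N : ℝ) ≤ ((2 : ℝ) ^ b') ^ N := by
      refine le_trans ?_ hCcard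
      exact_mod_cast Nat.sInf_le (s := {k : ℕ | ∃ C : Finset (EuclideanSpace ℝ (Fin N)),
        C.card = k ∧ ∀ x ∈ closedBall (0 : EuclideanSpace ℝ (Fin N)) R, ∃ c ∈ C, dist x c ≤ ε})
        ⟨C, rfl, hC⟩
    have := Real.logb_le_logb_of_le (b := 2) (by norm_num) hpos hle
    rw [Real.logb_pow, Real.logb_rpow (by norm_num) (by norm_num)] at this
    rw [div_le_iff₀ hN']
    linarith
end
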